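/- Let (Ω, 𝓕, P) be a probability space with a filtration (𝓕_t)_{t∈ℕ}, and let (D_t)_{t≥1} be a sequence of real random variables such that D_t is 𝓕_t-measurable, E[D_t | 𝓕_{t-1}] = 0 almost surely for every t, and |D_t| ≤ C almost surely for all t, for some constant C < ∞. Suppose there is σ² ≥ 0 such that (1/T) ∑_{t=1}^T E[D_t² | 𝓕_{t-1}] converges in probability to σ² as T → ∞. Then the distribution of T^{-1/2} ∑_{t=1}^T D_t converges weakly to the Gaussian distribution N(0, σ²). (This bounded-difference martingale central limit theorem is the core of the asymptotic-normality conclusion of Theorem S.1 for the IPW estimator of the average treatment effect, after the martingale-difference structure, boundedness, and Lindeberg condition of the errors have been verified.) -/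

import Mathlib

open MeasureTheory ProbabilityTheory Filter Topology

/-!
For a martingale difference sequence with partial sums `S n` and predictable quadratic variation
`⟨S⟩ n`, the compensated exponential `Z n = exp (i S n + ⟨S⟩ n / 2)` is nearly a martingale. Indeed,
a centred increment `X` with `|X| ≤ c` and conditional variance `v` has conditional characteristic
function `E[exp (i X)] = exp (-v / 2) + O (c v)`, so that one step changes `E[Z]` by at most
`O (c) E[v]` as long as `⟨S⟩` stays bounded. The errors sum to `O (c) E[⟨S⟩ n]`, hence `E[Z n] → 1`
along a triangular array with `c → 0` and `⟨S⟩ n` bounded. If moreover `⟨S⟩ n → s` in probability,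
then `exp (⟨S⟩ n / 2)` may be replaced by `exp (s / 2)` in `E[Z n]`, so `E[exp (i S n)]` tends to
`exp (-s / 2)`, and Lévy's continuity theorem concludes.
-/

section ExpBounds

lemma norm_cexp_mul_I_sub_taylor_le (x : ℝ) :
    ‖Complex.exp (x * Complex.I) - (1 + x * Complex.I - (x ^ 2 : ℝ) / 2)‖
      ≤ |x| ^ 3 * Real.exp |x| := by
  have h := Complex.norm_exp_sub_sum_le_norm_mul_exp (x * Complex.I) 3
  have htaylor : ∑ k ∈ Finset.range 3, (x * Complex.I) ^ k / (k.factorial : ℂ)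
      = 1 + x * Complex.I - (x ^ 2 : ℝ) / 2 := by
    simp only [Finset.sum_range_succ, Finset.sum_range_zero, Nat.factorial, mul_pow, Complex.I_sq]
    push_cast
    ring
  simpa only [htaylor, norm_mul, Complex.norm_I, mul_one, Complex.norm_real, Real.norm_eq_abs]
    using h

lemma abs_exp_neg_sub_one_sub_le {y : ℝ} (hy : 0 ≤ y) :
    |Real.exp (-y) - (1 - y)| ≤ y ^ 2 / 2 := by
  have hlower : 1 - y ≤ Real.exp (-y) := Real.one_sub_le_exp_neg y
  have hupper : Real.exp (-y) ≤ 1 - y + y ^ 2 / 2 := by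
    rw [Real.exp_neg]
    refine (inv_le_iff_one_le_mul₀ (Real.exp_pos y)).2 ?_
    calc (1 : ℝ) ≤ (1 - y + y ^ 2 / 2) * (1 + y + y ^ 2 / 2) := by nlinarith [sq_nonneg (y ^ 2)]
      _ ≤ (1 - y + y ^ 2 / 2) * Real.exp y := by
        gcongr
        · nlinarith [sq_nonneg (y - 1)]
        · exact Real.quadratic_le_exp_of_nonneg hy
  rw [abs_le]
  constructor <;> linarith [sq_nonneg y]

lemma norm_cexp_ofReal_mul_I_add_ofReal_div_two (x y : ℝ) :
    ‖Complex.exp (x * Complex.I + y / 2)‖ = Real.exp (y / 2) := by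
  simp [Complex.norm_exp]

end ExpBounds

section Probability

variable {Ω : Type*} {m0 : MeasurableSpace Ω} {P : Measure Ω}

section ConditionalExpectation

lemma integrable_cexp_mul_I [IsFiniteMeasure P] {X : Ω → ℝ} (hX : AEStronglyMeasurable X P) :
    Integrable (fun ω => Complex.exp (X ω * Complex.I)) P :=
  .of_bound ((by fun_prop : Continuous fun x : ℝ => Complex.exp (x * Complex.I))
    |>.comp_aestronglyMeasurable hX) 1 (ae_of_all _ fun _ => (Complex.norm_exp_ofReal_mul_I _).le)

variable {m : MeasurableSpace Ω}

lemma integral_mul_condExp {A : Type*} [NormedRing A] [NormedAlgebra ℝ A] [CompleteSpace A]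
    (hm : m ≤ m0) [SigmaFinite (P.trim hm)] {W Y : Ω → A} (hW : StronglyMeasurable[m] W)
    (hWY : Integrable (fun ω => W ω * Y ω) P) (hY : Integrable Y P) :
    ∫ ω, W ω * (P[Y | m]) ω ∂P = ∫ ω, W ω * Y ω ∂P := by
  rw [← integral_condExp hm (f := fun ω => W ω * Y ω)]
  exact integral_congr_ae
    (condExp_bilin_of_stronglyMeasurable_left (ContinuousLinearMap.mul ℝ A) hW hWY hY).symm

lemma condExp_smul_const {E : Type*} [NormedAddCommGroup E] [NormedSpace ℝ E] [CompleteSpace E]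
    {X : Ω → ℝ} (hX : Integrable X P) (z : E) :
    P[fun ω => X ω • z | m] =ᵐ[P] fun ω => (P[X | m]) ω • z :=
  ((ContinuousLinearMap.toSpanSingleton ℝ z).comp_condExp_comm hX).symm

lemma condExp_sq_nonneg (X : Ω → ℝ) : 0 ≤ᵐ[P] P[fun ω => X ω ^ 2 | m] :=
  condExp_nonneg (ae_of_all _ fun ω => sq_nonneg (X ω))

variable {X : Ω → ℝ} {c : ℝ}

lemma condExp_sq_le_sq_of_abs_le (hXc : ∀ᵐ ω ∂P, |X ω| ≤ c) :
    ∀ᵐ ω ∂P, (P[fun ω' => X ω' ^ 2 | m]) ω ≤ c ^ 2 := by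
  refine condExp_le_nonneg_const (sq_nonneg c) ?_
  filter_upwards [hXc] with ω h
  exact sq_le_sq' (neg_le_of_abs_le h) (le_of_abs_le h)

variable [IsFiniteMeasure P]

lemma condExp_quadratic_taylor_cexp (hm : m ≤ m0) (hX : Integrable X P)
    (hX2 : Integrable (fun ω => X ω ^ 2) P) (hX0 : P[X | m] =ᵐ[P] 0) :
    P[fun ω => 1 + X ω * Complex.I - (X ω ^ 2 : ℝ) / 2 | m]
      =ᵐ[P] fun ω => 1 - ((P[fun ω' => X ω' ^ 2 | m]) ω : ℂ) / 2 := by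
  have hsmul : (fun ω => 1 + X ω * Complex.I - (X ω ^ 2 : ℝ) / 2)
      = (fun _ => (1 : ℂ)) + (fun ω => X ω • Complex.I) - fun ω => X ω ^ 2 • (1 / 2 : ℂ) := by
    ext ω
    simp only [Pi.add_apply, Pi.sub_apply, Complex.real_smul]
    ring
  have hI : Integrable (fun ω => X ω • Complex.I) P := hX.smul_const _
  have hone : Integrable (fun _ => (1 : ℂ)) P := integrable_const _
  rw [hsmul]
  filter_upwards [condExp_sub (hone.add hI) (hX2.smul_const (1 / 2 : ℂ)) m,
    condExp_add hone hI m, condExp_smul_const (m := m) hX Complex.I,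
    condExp_smul_const (m := m) hX2 (1 / 2 : ℂ), hX0] with ω hsub hadd h1 h2 h0
  rw [hsub, Pi.sub_apply, hadd, Pi.add_apply, h1, h2, h0, condExp_const hm]
  simp [div_eq_mul_inv]

lemma norm_condExp_cexp_mul_I_sub_one_sub_le (hm : m ≤ m0) (hX : Integrable X P)
    (hXc : ∀ᵐ ω ∂P, |X ω| ≤ c) (hX0 : P[X | m] =ᵐ[P] 0) :
    ∀ᵐ ω ∂P, ‖(P[fun ω' => Complex.exp (X ω' * Complex.I) | m]) ω
        - (1 - ((P[fun ω' => X ω' ^ 2 | m]) ω : ℂ) / 2)‖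
      ≤ c * Real.exp c * (P[fun ω' => X ω' ^ 2 | m]) ω := by
  have hX2 : Integrable (fun ω => X ω ^ 2) P := (MemLp.of_bound hX.1 c hXc).integrable_sq
  set taylor : Ω → ℂ := fun ω => 1 + X ω * Complex.I - (X ω ^ 2 : ℝ) / 2
  have htaylor : Integrable taylor P :=
    ((integrable_const 1).add (hX.ofReal.mul_const _)).sub (hX2.ofReal.div_const 2)
  have hexp := integrable_cexp_mul_I hX.1
  have hremainder : ∀ᵐ ω ∂P, ‖Complex.exp (X ω * Complex.I) - taylor ω‖
      ≤ c * Real.exp c * X ω ^ 2 := by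
    filter_upwards [hXc] with ω h
    calc ‖Complex.exp (X ω * Complex.I) - taylor ω‖
        ≤ |X ω| ^ 3 * Real.exp |X ω| := norm_cexp_mul_I_sub_taylor_le (X ω)
      _ = |X ω| * Real.exp |X ω| * X ω ^ 2 := by rw [← sq_abs (X ω)]; ring
      _ ≤ c * Real.exp c * X ω ^ 2 := by
        have := (abs_nonneg _).trans h
        gcongr
  filter_upwards [condExp_sub hexp htaylor m, condExp_quadratic_taylor_cexp hm hX hX2 hX0,
    norm_condExp_le (m := m) (μ := P) ((fun ω => Complex.exp (X ω * Complex.I)) - taylor),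
    condExp_mono (m := m) (hexp.sub htaylor).norm (hX2.const_mul _) hremainder,
    condExp_smul (μ := P) (c * Real.exp c) (fun ω => X ω ^ 2) m]
    with ω hsub htaylor_eq hnorm hmono hsmul
  rw [Pi.sub_apply, htaylor_eq] at hsub
  rw [← hsub]
  exact (hnorm.trans hmono).trans_eq hsmul

/- The term `c * exp c` is the third order Taylor remainder of `exp (i X)`; the term `c ^ 2 / 8` is
the cost of replacing `1 - v / 2` by `exp (-v / 2)` when `v ≤ c ^ 2`. -/
lemma norm_condExp_cexp_mul_I_sub_exp_neg_le (hm : m ≤ m0) (hX : Integrable X P)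
    (hXc : ∀ᵐ ω ∂P, |X ω| ≤ c) (hX0 : P[X | m] =ᵐ[P] 0) :
    ∀ᵐ ω ∂P, ‖(P[fun ω' => Complex.exp (X ω' * Complex.I) | m]) ω
        - Real.exp (-((P[fun ω' => X ω' ^ 2 | m]) ω / 2))‖
      ≤ (c * Real.exp c + c ^ 2 / 8) * (P[fun ω' => X ω' ^ 2 | m]) ω := by
  filter_upwards [norm_condExp_cexp_mul_I_sub_one_sub_le hm hX hXc hX0,
    condExp_sq_nonneg X, condExp_sq_le_sq_of_abs_le hXc] with ω htaylor hv0 hvc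
  set v := (P[fun ω' => X ω' ^ 2 | m]) ω
  have hexp : ‖(1 - (v : ℂ) / 2) - Real.exp (-(v / 2))‖ ≤ c ^ 2 / 8 * v := by
    calc ‖(1 - (v : ℂ) / 2) - Real.exp (-(v / 2))‖
        = |Real.exp (-(v / 2)) - (1 - v / 2)| := by
          rw [norm_sub_rev, ← Real.norm_eq_abs, ← Complex.norm_real]
          push_cast
          rfl
      _ ≤ (v / 2) ^ 2 / 2 := abs_exp_neg_sub_one_sub_le (div_nonneg hv0 zero_le_two)
      _ = v / 8 * v := by ring
      _ ≤ c ^ 2 / 8 * v := by gcongr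
  rw [add_mul]
  exact (norm_sub_le_norm_sub_add_norm_sub _ _ _).trans (add_le_add htaylor hexp)

lemma norm_integral_mul_cexp_mul_I_sub_integral_mul_exp_neg_le (hm : m ≤ m0) {W : Ω → ℂ} {M : ℝ}
    (hW : StronglyMeasurable[m] W) (hWM : ∀ᵐ ω ∂P, ‖W ω‖ ≤ M) (hX : Integrable X P)
    (hXc : ∀ᵐ ω ∂P, |X ω| ≤ c) (hX0 : P[X | m] =ᵐ[P] 0) :
    ‖∫ ω, W ω * Complex.exp (X ω * Complex.I) ∂P
        - ∫ ω, W ω * Real.exp (-((P[fun ω' => X ω' ^ 2 | m]) ω / 2)) ∂P‖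
      ≤ M * (c * Real.exp c + c ^ 2 / 8) * ∫ ω, (P[fun ω' => X ω' ^ 2 | m]) ω ∂P := by
  set v : Ω → ℝ := P[fun ω' => X ω' ^ 2 | m]
  have hexp := integrable_cexp_mul_I hX.1
  have hW' : AEStronglyMeasurable[m0] W P := (hW.mono hm).aestronglyMeasurable
  have hexpv : Integrable (fun ω => (Real.exp (-(v ω / 2)) : ℂ)) P := by
    refine .of_bound (Measurable.aestronglyMeasurable ?_) 1 ?_
    · have hv : Measurable[m0] v := stronglyMeasurable_condExp.measurable.mono hm le_rfl
      fun_prop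
    · filter_upwards [condExp_sq_nonneg (m := m) (P := P) X] with ω h
      rw [Complex.norm_real, Real.norm_eq_abs, Real.abs_exp, Real.exp_le_one_iff]
      exact neg_nonpos.2 (div_nonneg h zero_le_two)
  rw [← integral_mul_condExp hm hW (hexp.bdd_mul hW' hWM) hexp,
    ← integral_sub (integrable_condExp.bdd_mul hW' hWM) (hexpv.bdd_mul hW' hWM),
    ← integral_const_mul]
  refine norm_integral_le_of_norm_le (integrable_condExp.const_mul _) ?_
  filter_upwards [hWM, norm_condExp_cexp_mul_I_sub_exp_neg_le hm hX hXc hX0] with ω hWω hdiff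
  rw [← mul_sub, norm_mul, mul_assoc]
  exact mul_le_mul hWω hdiff (norm_nonneg _) ((norm_nonneg _).trans hWω)

end ConditionalExpectation

section Convergence

variable {ι : Type*} {l : Filter ι}

lemma tendstoInMeasure_const_mul {A : Type*} [SeminormedRing A] {V : ι → Ω → A} {Z : Ω → A}
    (hV : TendstoInMeasure P V l Z) (a : A) :
    TendstoInMeasure P (fun i ω => a * V i ω) l fun ω => a * Z ω := by
  rw [tendstoInMeasure_iff_norm] at hV ⊢
  intro ε hε
  refine tendsto_of_tendsto_of_tendsto_of_le_of_le tendsto_const_nhds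
    (hV (ε / (‖a‖ + 1)) (by positivity)) (fun _ => zero_le) fun i => measure_mono fun ω hω => ?_
  rw [Set.mem_ofPred_eq, div_le_iff₀' (by positivity)]
  calc ε ≤ ‖a * (V i ω - Z ω)‖ := by rwa [mul_sub]
    _ ≤ ‖a‖ * ‖V i ω - Z ω‖ := norm_mul_le _ _
    _ ≤ (‖a‖ + 1) * ‖V i ω - Z ω‖ := by
        gcongr
        exact le_add_of_nonneg_right zero_le_one

lemma tendstoInMeasure_of_forall_measure_lt_dist {E : Type*} [PseudoMetricSpace E]
    {V : ι → Ω → E} {Z : Ω → E}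
    (h : ∀ ε, 0 < ε → Tendsto (fun i => P {ω | ε < dist (V i ω) (Z ω)}) l (𝓝 0)) :
    TendstoInMeasure P V l Z :=
  tendstoInMeasure_iff_dist.2 fun ε hε => tendsto_of_tendsto_of_tendsto_of_le_of_le
    tendsto_const_nhds (h (ε / 2) (half_pos hε)) (fun _ => zero_le) fun _ =>
      measure_mono fun _ hω => (half_lt_self hε).trans_le hω

lemma tendsto_integral_comp_of_tendstoInMeasure [l.IsCountablyGenerated] [IsFiniteMeasure P]
    {E F : Type*} [PseudoEMetricSpace E] [NormedAddCommGroup F] [NormedSpace ℝ F]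
    {V : ι → Ω → E} {Z : Ω → E} {g : E → F} {M : ℝ} (hg : Continuous g)
    (hV : TendstoInMeasure P V l Z)
    (hVm : ∀ i, AEStronglyMeasurable (V i) P) (hM : ∀ i, ∀ᵐ ω ∂P, ‖g (V i ω)‖ ≤ M) :
    Tendsto (fun i => ∫ ω, g (V i ω) ∂P) l (𝓝 (∫ ω, g (Z ω) ∂P)) := by
  refine tendsto_of_subseq_tendsto fun ns hns => ?_
  obtain ⟨ms, -, hae⟩ := (hV.comp hns).exists_seq_tendsto_ae
  refine ⟨ms, tendsto_integral_of_dominated_convergence (fun _ => M)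
    (fun k => hg.comp_aestronglyMeasurable (hVm _)) (integrable_const M) (fun k => hM _) ?_⟩
  filter_upwards [hae] with ω h
  exact (hg.tendsto _).comp h

lemma tendsto_integral_of_tendstoInDistribution {E Ω' : Type*} {mΩ' : MeasurableSpace Ω'}
    {P' : Measure Ω'} [IsProbabilityMeasure P'] {Ωs : ι → Type*} {ms : ∀ i, MeasurableSpace (Ωs i)}
    {Ps : ∀ i, Measure (Ωs i)} [∀ i, IsProbabilityMeasure (Ps i)]
    [TopologicalSpace E] [MeasurableSpace E] [OpensMeasurableSpace E] {S : ∀ i, Ωs i → E}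
    {Y : Ω' → E} (h : TendstoInDistribution S l Y Ps P') (f : BoundedContinuousFunction E ℝ) :
    Tendsto (fun i => ∫ ω, f (S i ω) ∂(Ps i)) l (𝓝 (∫ ω, f (Y ω) ∂P')) := by
  have hmap := ProbabilityMeasure.tendsto_iff_forall_integral_tendsto.1 h.tendsto f
  simpa only [ProbabilityMeasure.coe_mk, integral_map h.aemeasurable_limit
    f.continuous.aestronglyMeasurable, integral_map (h.forall_aemeasurable _)
    f.continuous.aestronglyMeasurable] using hmap

end Convergence

/-- `X` is a martingale difference sequence for `𝓕`. It is indexed by the left endpoint: `X t` is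
the increment of the martingale between the times `t` and `t + 1`. -/
structure IsMartingaleDifference (X : ℕ → Ω → ℝ) (𝓕 : Filtration ℕ m0) (P : Measure Ω) :
    Prop where
  measurable : ∀ t, Measurable[𝓕 (t + 1)] (X t)
  integrable : ∀ t, Integrable (X t) P
  condExp_eq_zero : ∀ t, P[X t | 𝓕 t] =ᵐ[P] 0

/-- The predictable quadratic variation `⟨S⟩ n` of the partial sums `S n` of a martingale
difference sequence `X`. -/
noncomputable def predictableQuadVar (X : ℕ → Ω → ℝ) (𝓕 : Filtration ℕ m0) (P : Measure Ω)
    (n : ℕ) (ω : Ω) : ℝ :=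
  ∑ t ∈ Finset.range n, (P[fun ω' => X t ω' ^ 2 | 𝓕 t]) ω

/-- The exponential `exp (i S n + ⟨S⟩ n / 2)` of the partial sums `S n` of `X`, compensated so that
it is nearly a martingale when the increments are small. -/
noncomputable def compensatedExp (X : ℕ → Ω → ℝ) (𝓕 : Filtration ℕ m0) (P : Measure Ω)
    (n : ℕ) (ω : Ω) : ℂ :=
  Complex.exp ((∑ t ∈ Finset.range n, X t ω : ℝ) * Complex.I + predictableQuadVar X 𝓕 P n ω / 2)

variable {𝓕 : Filtration ℕ m0} {X : ℕ → Ω → ℝ}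

section PredictableQuadVar

lemma predictableQuadVar_succ (n : ℕ) (ω : Ω) :
    predictableQuadVar X 𝓕 P (n + 1) ω
      = predictableQuadVar X 𝓕 P n ω + (P[fun ω' => X n ω' ^ 2 | 𝓕 n]) ω :=
  Finset.sum_range_succ _ _

lemma measurable_predictableQuadVar_succ (n : ℕ) :
    Measurable[𝓕 n] (predictableQuadVar X 𝓕 P (n + 1)) :=
  Finset.measurable_fun_sum _ fun _ ht => stronglyMeasurable_condExp.measurable.mono
    (𝓕.mono (Nat.lt_succ_iff.1 (Finset.mem_range.1 ht))) le_rfl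

lemma measurable_predictableQuadVar (n : ℕ) : Measurable (predictableQuadVar X 𝓕 P n) :=
  Finset.measurable_fun_sum _ fun _ _ =>
    stronglyMeasurable_condExp.measurable.mono (𝓕.le _) le_rfl

lemma ae_monotone_predictableQuadVar :
    ∀ᵐ ω ∂P, Monotone fun n => predictableQuadVar X 𝓕 P n ω := by
  filter_upwards [ae_all_iff.2 fun t => condExp_sq_nonneg (P := P) (m := 𝓕 t) (X t)] with ω h
  exact monotone_nat_of_le_succ fun n => by
    rw [predictableQuadVar_succ]
    exact le_add_of_nonneg_right (h n)

lemma predictableQuadVar_le_mul_sq {c : ℝ} (hXc : ∀ t, ∀ᵐ ω ∂P, |X t ω| ≤ c) (n : ℕ) :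
    ∀ᵐ ω ∂P, predictableQuadVar X 𝓕 P n ω ≤ n * c ^ 2 := by
  filter_upwards [ae_all_iff.2 fun t => condExp_sq_le_sq_of_abs_le (m := 𝓕 t) (hXc t)] with ω h
  simpa [predictableQuadVar] using Finset.sum_le_card_nsmul (Finset.range n) _ _ fun t _ => h t

lemma predictableQuadVar_const_mul (a : ℝ) (n : ℕ) :
    predictableQuadVar (fun t ω => a * X t ω) 𝓕 P n
      =ᵐ[P] fun ω => a ^ 2 * predictableQuadVar X 𝓕 P n ω := by
  filter_upwards [ae_all_iff.2 fun t =>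
    condExp_smul (μ := P) (a ^ 2) (fun ω => X t ω ^ 2) (𝓕 t)] with ω h
  simp only [predictableQuadVar, Finset.mul_sum, mul_pow]
  exact Finset.sum_congr rfl fun t _ => h t

lemma tendsto_integral_abs_exp_predictableQuadVar_sub [IsFiniteMeasure P] {ι : Type*}
    {l : Filter ι} [l.IsCountablyGenerated] {𝓕 : ι → Filtration ℕ m0} {X : ι → ℕ → Ω → ℝ}
    {N : ι → ℕ} {K s : ℝ}
    (hK : ∀ i, ∀ᵐ ω ∂P, predictableQuadVar (X i) (𝓕 i) P (N i) ω ≤ K)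
    (hV : TendstoInMeasure P (fun i => predictableQuadVar (X i) (𝓕 i) P (N i)) l fun _ => s) :
    Tendsto (fun i => ∫ ω, |Real.exp (predictableQuadVar (X i) (𝓕 i) P (N i) ω / 2)
      - Real.exp (s / 2)| ∂P) l (𝓝 0) := by
  have h := tendsto_integral_comp_of_tendstoInMeasure
    (g := fun x => |Real.exp (x / 2) - Real.exp (s / 2)|)
    (M := Real.exp (K / 2) + Real.exp (s / 2)) (by fun_prop) hV
    (fun i => (measurable_predictableQuadVar (N i)).aestronglyMeasurable) fun i => by
      filter_upwards [hK i] with ω hω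
      rw [Real.norm_eq_abs, abs_abs]
      refine (abs_sub _ _).trans ?_
      rw [Real.abs_exp, Real.abs_exp]
      gcongr
  simpa using h

end PredictableQuadVar

namespace IsMartingaleDifference

lemma const_mul (hX : IsMartingaleDifference X 𝓕 P) (a : ℝ) :
    IsMartingaleDifference (fun t ω => a * X t ω) 𝓕 P where
  measurable t := (hX.measurable t).const_mul a
  integrable t := (hX.integrable t).const_mul a
  condExp_eq_zero t := by
    filter_upwards [condExp_smul (μ := P) a (X t) (𝓕 t), hX.condExp_eq_zero t] with ω hsmul h0
    exact hsmul.trans (by simp [h0])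

lemma measurable_sum (hX : IsMartingaleDifference X 𝓕 P) (n : ℕ) :
    Measurable[𝓕 n] fun ω => ∑ t ∈ Finset.range n, X t ω :=
  Finset.measurable_fun_sum _ fun t ht =>
    (hX.measurable t).mono (𝓕.mono (Finset.mem_range.1 ht)) le_rfl

lemma aemeasurable_sum (hX : IsMartingaleDifference X 𝓕 P) (n : ℕ) :
    AEMeasurable (fun ω => ∑ t ∈ Finset.range n, X t ω) P :=
  ((hX.measurable_sum n).mono (𝓕.le n) le_rfl).aemeasurable

lemma measurable_compensatedExp (hX : IsMartingaleDifference X 𝓕 P) (n : ℕ) :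
    Measurable (compensatedExp X 𝓕 P n) := by
  have hS := (hX.measurable_sum n).mono (𝓕.le n) le_rfl
  have hV := measurable_predictableQuadVar (P := P) (𝓕 := 𝓕) (X := X) n
  unfold compensatedExp
  fun_prop

section IsFiniteMeasure

variable [IsFiniteMeasure P]

lemma integrable_compensatedExp (hX : IsMartingaleDifference X 𝓕 P) {n : ℕ} {K : ℝ}
    (hK : ∀ᵐ ω ∂P, predictableQuadVar X 𝓕 P n ω ≤ K) :
    Integrable (compensatedExp X 𝓕 P n) P := by
  refine .of_bound (hX.measurable_compensatedExp n).aestronglyMeasurable (Real.exp (K / 2)) ?_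
  filter_upwards [hK] with ω h
  rw [compensatedExp, norm_cexp_ofReal_mul_I_add_ofReal_div_two]
  gcongr

lemma norm_integral_compensatedExp_succ_sub_le (hX : IsMartingaleDifference X 𝓕 P) {c K : ℝ}
    {n : ℕ} (hXc : ∀ᵐ ω ∂P, |X n ω| ≤ c)
    (hK : ∀ᵐ ω ∂P, predictableQuadVar X 𝓕 P (n + 1) ω ≤ K) :
    ‖∫ ω, compensatedExp X 𝓕 P (n + 1) ω ∂P - ∫ ω, compensatedExp X 𝓕 P n ω ∂P‖
      ≤ Real.exp (K / 2) * (c * Real.exp c + c ^ 2 / 8)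
        * ∫ ω, (P[fun ω' => X n ω' ^ 2 | 𝓕 n]) ω ∂P := by
  -- `⟨S⟩ (n + 1)` is already `𝓕 n`-measurable, so `W` only leaves the increment `X n` to average.
  set W : Ω → ℂ := fun ω => Complex.exp ((∑ t ∈ Finset.range n, X t ω : ℝ) * Complex.I
    + predictableQuadVar X 𝓕 P (n + 1) ω / 2)
  have hW : StronglyMeasurable[𝓕 n] W := by
    have hS := hX.measurable_sum n
    have hV := measurable_predictableQuadVar_succ (P := P) (𝓕 := 𝓕) (X := X) n
    exact Measurable.stronglyMeasurable (by fun_prop)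
  have hWK : ∀ᵐ ω ∂P, ‖W ω‖ ≤ Real.exp (K / 2) := by
    filter_upwards [hK] with ω h
    rw [norm_cexp_ofReal_mul_I_add_ofReal_div_two]
    gcongr
  have hZ_succ : compensatedExp X 𝓕 P (n + 1) = fun ω => W ω * Complex.exp (X n ω * Complex.I) := by
    ext ω
    rw [compensatedExp, ← Complex.exp_add, Finset.sum_range_succ]
    push_cast
    ring_nf
  have hZ : compensatedExp X 𝓕 P n
      = fun ω => W ω * Real.exp (-((P[fun ω' => X n ω' ^ 2 | 𝓕 n]) ω / 2)) := by
    ext ω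
    rw [compensatedExp, Complex.ofReal_exp, ← Complex.exp_add, predictableQuadVar_succ]
    push_cast
    ring_nf
  rw [hZ_succ, hZ]
  exact norm_integral_mul_cexp_mul_I_sub_integral_mul_exp_neg_le (𝓕.le n) hW hWK
    (hX.integrable n) hXc (hX.condExp_eq_zero n)

lemma norm_integral_compensatedExp_sub_exp_mul_le (hX : IsMartingaleDifference X 𝓕 P) {K : ℝ}
    {n : ℕ} (hK : ∀ᵐ ω ∂P, predictableQuadVar X 𝓕 P n ω ≤ K) (s : ℝ) :
    ‖∫ ω, compensatedExp X 𝓕 P n ω ∂P - Real.exp (s / 2)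
        * ∫ ω, Complex.exp ((∑ t ∈ Finset.range n, X t ω : ℝ) * Complex.I) ∂P‖
      ≤ ∫ ω, |Real.exp (predictableQuadVar X 𝓕 P n ω / 2) - Real.exp (s / 2)| ∂P := by
  have hS : Integrable (fun ω => Complex.exp ((∑ t ∈ Finset.range n, X t ω : ℝ) * Complex.I)) P :=
    integrable_cexp_mul_I (integrable_finsetSum _ fun t _ => hX.integrable t).1
  rw [← integral_const_mul, ← integral_sub (hX.integrable_compensatedExp hK) (hS.const_mul _)]
  refine (norm_integral_le_integral_norm _).trans_eq (integral_congr_ae (ae_of_all _ fun ω => ?_))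
  have hfactor : compensatedExp X 𝓕 P n ω - Real.exp (s / 2)
        * Complex.exp ((∑ t ∈ Finset.range n, X t ω : ℝ) * Complex.I)
      = Complex.exp ((∑ t ∈ Finset.range n, X t ω : ℝ) * Complex.I)
        * (Real.exp (predictableQuadVar X 𝓕 P n ω / 2) - Real.exp (s / 2) : ℝ) := by
    rw [compensatedExp, Complex.exp_add]
    push_cast
    ring
  simp only [hfactor, norm_mul, Complex.norm_exp_ofReal_mul_I, one_mul, Complex.norm_real,
    Real.norm_eq_abs]

end IsFiniteMeasure

lemma norm_integral_compensatedExp_sub_one_le [IsProbabilityMeasure P]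
    (hX : IsMartingaleDifference X 𝓕 P) {c K : ℝ} {n : ℕ} (hXc : ∀ t, ∀ᵐ ω ∂P, |X t ω| ≤ c)
    (hK : ∀ᵐ ω ∂P, predictableQuadVar X 𝓕 P n ω ≤ K) :
    ‖∫ ω, compensatedExp X 𝓕 P n ω ∂P - 1‖
      ≤ Real.exp (K / 2) * (c * Real.exp c + c ^ 2 / 8) * K := by
  have hc : 0 ≤ c := by
    obtain ⟨ω, h⟩ := (hXc 0).exists
    exact (abs_nonneg _).trans h
  have hzero : ∫ ω, compensatedExp X 𝓕 P 0 ω ∂P = 1 := by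
    simp [compensatedExp, predictableQuadVar]
  have hstep : ∀ t < n,
      ‖∫ ω, compensatedExp X 𝓕 P (t + 1) ω ∂P - ∫ ω, compensatedExp X 𝓕 P t ω ∂P‖
        ≤ Real.exp (K / 2) * (c * Real.exp c + c ^ 2 / 8)
          * ∫ ω, (P[fun ω' => X t ω' ^ 2 | 𝓕 t]) ω ∂P := fun t ht =>
    hX.norm_integral_compensatedExp_succ_sub_le (hXc t) <| by
      filter_upwards [hK, ae_monotone_predictableQuadVar (P := P) (𝓕 := 𝓕) (X := X)]
        with ω h hmono
      exact (hmono ht).trans h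
  have hsum : ∑ t ∈ Finset.range n, ∫ ω, (P[fun ω' => X t ω' ^ 2 | 𝓕 t]) ω ∂P ≤ K := by
    rw [← integral_finsetSum _ fun _ _ => integrable_condExp]
    simpa [predictableQuadVar] using integral_mono_ae
      (integrable_finsetSum _ fun _ _ => integrable_condExp) (integrable_const K) hK
  calc ‖∫ ω, compensatedExp X 𝓕 P n ω ∂P - 1‖
      = ‖∑ t ∈ Finset.range n,
          (∫ ω, compensatedExp X 𝓕 P (t + 1) ω ∂P - ∫ ω, compensatedExp X 𝓕 P t ω ∂P)‖ := by
        rw [Finset.sum_range_sub fun t => ∫ ω, compensatedExp X 𝓕 P t ω ∂P, hzero]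
    _ ≤ ∑ t ∈ Finset.range n, Real.exp (K / 2) * (c * Real.exp c + c ^ 2 / 8)
          * ∫ ω, (P[fun ω' => X t ω' ^ 2 | 𝓕 t]) ω ∂P :=
        norm_sum_le_of_le _ fun t ht => hstep t (Finset.mem_range.1 ht)
    _ ≤ Real.exp (K / 2) * (c * Real.exp c + c ^ 2 / 8) * K := by
        rw [← Finset.mul_sum]
        gcongr

variable [IsProbabilityMeasure P]

section TriangularArray

variable {ι : Type*} {l : Filter ι} {𝓕 : ι → Filtration ℕ m0} {X : ι → ℕ → Ω → ℝ} {N : ι → ℕ}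
  {c : ι → ℝ} {K : ℝ}

lemma tendsto_integral_compensatedExp (hX : ∀ i, IsMartingaleDifference (X i) (𝓕 i) P)
    (hXc : ∀ i t, ∀ᵐ ω ∂P, |X i t ω| ≤ c i) (hc : Tendsto c l (𝓝 0))
    (hK : ∀ i, ∀ᵐ ω ∂P, predictableQuadVar (X i) (𝓕 i) P (N i) ω ≤ K) :
    Tendsto (fun i => ∫ ω, compensatedExp (X i) (𝓕 i) P (N i) ω ∂P) l (𝓝 1) := by
  have hbound : Tendsto (fun i => Real.exp (K / 2) * (c i * Real.exp (c i) + c i ^ 2 / 8) * K) l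
      (𝓝 0) := by
    have hcont : Continuous fun x : ℝ =>
        Real.exp (K / 2) * (x * Real.exp x + x ^ 2 / 8) * K := by fun_prop
    simpa [Function.comp_def] using (hcont.tendsto 0).comp hc
  exact tendsto_iff_norm_sub_tendsto_zero.2 <| squeeze_zero (fun _ => norm_nonneg _)
    (fun i => (hX i).norm_integral_compensatedExp_sub_one_le (hXc i) (hK i)) hbound

lemma tendsto_integral_cexp_sum_mul_I [l.IsCountablyGenerated] {s : ℝ}
    (hX : ∀ i, IsMartingaleDifference (X i) (𝓕 i) P)
    (hXc : ∀ i t, ∀ᵐ ω ∂P, |X i t ω| ≤ c i) (hc : Tendsto c l (𝓝 0))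
    (hK : ∀ i, ∀ᵐ ω ∂P, predictableQuadVar (X i) (𝓕 i) P (N i) ω ≤ K)
    (hV : TendstoInMeasure P (fun i => predictableQuadVar (X i) (𝓕 i) P (N i)) l fun _ => s) :
    Tendsto
      (fun i => ∫ ω, Complex.exp ((∑ t ∈ Finset.range (N i), X i t ω : ℝ) * Complex.I) ∂P) l
      (𝓝 (Complex.exp (-(s / 2)))) := by
  have hdiff := squeeze_zero_norm
    (fun i => (hX i).norm_integral_compensatedExp_sub_exp_mul_le (hK i) s)
    (tendsto_integral_abs_exp_predictableQuadVar_sub hK hV)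
  have hlim := ((tendsto_integral_compensatedExp hX hXc hc hK).sub hdiff).const_mul
    (Complex.exp (-(s / 2)))
  rw [sub_zero, mul_one] at hlim
  refine hlim.congr fun i => ?_
  rw [sub_sub_cancel, Complex.ofReal_exp, ← mul_assoc, ← Complex.exp_add]
  simp

end TriangularArray

variable {Ω' : Type*} {mΩ' : MeasurableSpace Ω'} {P' : Measure Ω'} [IsProbabilityMeasure P']
  {Y : Ω' → ℝ} {s : NNReal}

theorem tendstoInDistribution_sum {𝓕 : ℕ → Filtration ℕ m0} {X : ℕ → ℕ → Ω → ℝ} {N : ℕ → ℕ}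
    {c : ℕ → ℝ} {K : ℝ} (hY : HasLaw Y (gaussianReal 0 s) P')
    (hX : ∀ n, IsMartingaleDifference (X n) (𝓕 n) P)
    (hXc : ∀ n t, ∀ᵐ ω ∂P, |X n t ω| ≤ c n) (hc : Tendsto c atTop (𝓝 0))
    (hK : ∀ n, ∀ᵐ ω ∂P, predictableQuadVar (X n) (𝓕 n) P (N n) ω ≤ K)
    (hV : TendstoInMeasure P (fun n => predictableQuadVar (X n) (𝓕 n) P (N n)) atTop
      fun _ => (s : ℝ)) :
    TendstoInDistribution (fun n ω => ∑ t ∈ Finset.range (N n), X n t ω) atTop Y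
      (fun _ => P) P' where
  forall_aemeasurable n := (hX n).aemeasurable_sum (N n)
  aemeasurable_limit := hY.aemeasurable
  tendsto := by
    refine ProbabilityMeasure.tendsto_iff_tendsto_charFun.2 fun u => ?_
    have hcharFun (n : ℕ) : charFun (P.map fun ω => ∑ t ∈ Finset.range (N n), X n t ω) u
        = ∫ ω, Complex.exp ((∑ t ∈ Finset.range (N n), u * X n t ω : ℝ) * Complex.I) ∂P := by
      rw [charFun_apply_real, integral_map ((hX n).aemeasurable_sum (N n)) (by fun_prop)]
      simp only [← Finset.mul_sum, Complex.ofReal_mul]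
    have hquadVar (n : ℕ) := predictableQuadVar_const_mul (P := P) (𝓕 := 𝓕 n) (X := X n) u (N n)
    rw! [hY.map_eq]
    simp only [ProbabilityMeasure.coe_mk, hcharFun, charFun_gaussianReal]
    convert tendsto_integral_cexp_sum_mul_I (c := fun n => |u| * c n) (K := u ^ 2 * K)
      (fun n => (hX n).const_mul u) ?_ ?_ ?_
      ((tendstoInMeasure_const_mul hV (u ^ 2)).congr_left fun n => (hquadVar n).symm) using 2
    · push_cast
      ring_nf
    · intro n t
      filter_upwards [hXc n t] with ω h
      rw [abs_mul]
      gcongr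
    · simpa using hc.const_mul |u|
    · intro n
      filter_upwards [hquadVar n, hK n] with ω heq h
      rw [heq]
      gcongr

theorem tendstoInDistribution_inv_sqrt_mul_sum {C : ℝ} (hY : HasLaw Y (gaussianReal 0 s) P')
    (hX : IsMartingaleDifference X 𝓕 P) (hXC : ∀ t, ∀ᵐ ω ∂P, |X t ω| ≤ C)
    (hV : TendstoInMeasure P (fun (n : ℕ) ω => (n : ℝ)⁻¹ * predictableQuadVar X 𝓕 P n ω) atTop
      fun _ => (s : ℝ)) :
    TendstoInDistribution (fun (n : ℕ) ω => (√n)⁻¹ * ∑ t ∈ Finset.range n, X t ω) atTop Y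
      (fun _ => P) P' := by
  have hquadVar (n : ℕ) : predictableQuadVar (fun t ω => (√n)⁻¹ * X t ω) 𝓕 P n
      =ᵐ[P] fun ω => (n : ℝ)⁻¹ * predictableQuadVar X 𝓕 P n ω := by
    simpa [inv_pow] using predictableQuadVar_const_mul (P := P) (𝓕 := 𝓕) (X := X) (√n)⁻¹ n
  have hsqrt : Tendsto (fun n : ℕ => (√n)⁻¹ * C) atTop (𝓝 0) := by
    simpa using (tendsto_inv_atTop_zero.comp <| Real.tendsto_sqrt_atTop.comp
      tendsto_natCast_atTop_atTop).mul_const C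
  simp only [Finset.mul_sum]
  refine tendstoInDistribution_sum (K := C ^ 2) hY (fun n => hX.const_mul (√n)⁻¹)
    (fun n t => ?_) hsqrt (fun n => ?_) (hV.congr_left fun n => (hquadVar n).symm)
  · filter_upwards [hXC t] with ω h
    rw [abs_mul, abs_of_nonneg (by positivity : 0 ≤ (√(n : ℝ))⁻¹)]
    gcongr
  · filter_upwards [hquadVar n, predictableQuadVar_le_mul_sq (𝓕 := 𝓕) hXC n] with ω heq h
    rw [heq]
    calc (n : ℝ)⁻¹ * predictableQuadVar X 𝓕 P n ω ≤ (n : ℝ)⁻¹ * (n * C ^ 2) := by gcongr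
      _ = (n : ℝ)⁻¹ * n * C ^ 2 := (mul_assoc _ _ _).symm
      _ ≤ C ^ 2 := mul_le_of_le_one_left (sq_nonneg C) inv_mul_le_one

end IsMartingaleDifference

end Probability

/-- Bounded-difference martingale central limit theorem: if `(D t)` is a bounded
martingale difference sequence whose averaged conditional second moments converge
in probability to `σ²`, then `T^{-1/2} ∑_{t=1}^T D t` converges in distribution
to `N(0, σ²)`. -/
theorem stmt_0
    {Ω : Type*} {m0 : MeasurableSpace Ω} (P : Measure Ω) [IsProbabilityMeasure P]
    (𝓕 : Filtration ℕ m0)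
    (D : ℕ → Ω → ℝ) (C : ℝ)
    (hadapt : ∀ t, 1 ≤ t → Measurable[𝓕 t] (D t))
    (hint : ∀ t, 1 ≤ t → Integrable (D t) P)
    (hmdg : ∀ t, 1 ≤ t → P[D t|𝓕 (t - 1)] =ᵐ[P] 0)
    (hbdd : ∀ t, 1 ≤ t → ∀ᵐ ω ∂P, |D t ω| ≤ C)
    (σ2 : NNReal)
    (hvar : ∀ ε : ℝ, 0 < ε →
      Tendsto
        (fun T : ℕ =>
          P {ω | ε < |(T : ℝ)⁻¹ * ∑ t ∈ Finset.Icc 1 T,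
              (P[fun ω' => D t ω' ^ 2|𝓕 (t - 1)]) ω - (σ2 : ℝ)|})
        atTop (𝓝 0)) :
    ∀ f : BoundedContinuousFunction ℝ ℝ,
      Tendsto
        (fun T : ℕ =>
          ∫ ω, f ((Real.sqrt (T : ℝ))⁻¹ * ∑ t ∈ Finset.Icc 1 T, D t ω) ∂P)
        atTop (𝓝 (∫ x, f x ∂(gaussianReal 0 σ2))) := by
  have hX : IsMartingaleDifference (fun t => D (t + 1)) 𝓕 P :=
    ⟨fun t => hadapt (t + 1) t.succ_pos, fun t => hint (t + 1) t.succ_pos,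
      fun t => hmdg (t + 1) t.succ_pos⟩
  have hreindex (T : ℕ) (a : ℕ → ℝ) :
      ∑ t ∈ Finset.Icc 1 T, a t = ∑ t ∈ Finset.range T, a (t + 1) := by
    rw [Finset.range_eq_Ico, Finset.sum_Ico_add' a 0 T 1]
    rfl
  have hV : TendstoInMeasure P
      (fun (T : ℕ) ω => (T : ℝ)⁻¹ * predictableQuadVar (fun t => D (t + 1)) 𝓕 P T ω)
      atTop fun _ => (σ2 : ℝ) :=
    tendstoInMeasure_of_forall_measure_lt_dist fun ε hε => by
      simpa only [hreindex, Nat.add_sub_cancel, Real.dist_eq, predictableQuadVar] using hvar ε hε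
  have hlim := hX.tendstoInDistribution_inv_sqrt_mul_sum HasLaw.id
    (fun t => hbdd (t + 1) t.succ_pos) hV
  intro f
  simpa only [hreindex, id] using tendsto_integral_of_tendstoInDistribution hlim f
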